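/- Let ν, b, μ, A ∈ ℂ with ν ≠ 0. Suppose u is meromorphic on all of ℂ, nonconstant, solves the KS ODE on the complement of its set of poles, and is doubly periodic: there exist ω₁, ω₂ ∈ ℂ \ {0} with ω₂/ω₁ ∉ ℝ such that u(z + ω₁) = u(z) and u(z + ω₂) = u(z) for all z outside the poles of u. Then b² = 16μν. -/

import Mathlib

open Filter Topology

lemma ks_deriv_zpow {f g : ℂ → ℂ} {s : ℂ} (n : ℤ) (hg : AnalyticAt ℂ g s)
    (hf : ∀ᶠ z in 𝓝[≠] s, f z = (z - s) ^ n * g z) :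
    ∀ᶠ z in 𝓝[≠] s, deriv f z = (z - s) ^ (n - 1) * (n * g z + (z - s) * deriv g z) := by
  have h1 := eventually_eventually_nhdsWithin.2 hf
  have h2 : ∀ᶠ z in 𝓝[≠] s, AnalyticAt ℂ g z :=
    (hg.eventually_analyticAt).filter_mono nhdsWithin_le_nhds
  filter_upwards [h1, h2, self_mem_nhdsWithin] with z hz hgz hne
  have hne' : z ≠ s := hne
  have hx : z - s ≠ 0 := sub_ne_zero.2 hne'
  rw [IsOpen.nhdsWithin_eq isOpen_compl_singleton hne] at hz
  have : f =ᶠ[𝓝 z] fun w => (w - s) ^ n * g w := hz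
  rw [this.deriv_eq]
  have hd : HasDerivAt (fun w : ℂ => (w - s) ^ n) (n * (z - s) ^ (n - 1)) z := by
    have := (hasDerivAt_zpow n (z - s) (Or.inl hx)).comp z ((hasDerivAt_id z).sub_const s)
    simpa [Function.comp_def] using this
  have := (hd.mul hgz.differentiableAt.hasDerivAt).deriv
  refine this.trans ?_
  have : (z - s) ^ n = (z - s) ^ (n - 1) * (z - s) := by
    rw [← zpow_add_one₀ hx]; simp
  simp only [this]; ring

lemma ks_coeff0 {s a : ℂ} {H : ℂ → ℂ} (hH : ContinuousAt H s)
    (h : ∀ᶠ z in 𝓝[≠] s, a + (z - s) * H z = 0) : a = 0 := by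
  have h1 : Tendsto (fun z => a + (z - s) * H z) (𝓝[≠] s) (𝓝 (a + (s - s) * H s)) := by
    have : ContinuousAt (fun z => a + (z - s) * H z) s := by fun_prop
    exact this.tendsto.mono_left nhdsWithin_le_nhds
  have h2 : Tendsto (fun z => a + (z - s) * H z) (𝓝[≠] s) (𝓝 0) :=
    tendsto_const_nhds.congr' (h.mono fun z hz => hz.symm)
  have := tendsto_nhds_unique h1 h2
  simpa using this

lemma ks_coeff {s a0 a1 a2 : ℂ} {H : ℂ → ℂ} (hH : ContinuousAt H s)
    (h : ∀ᶠ z in 𝓝[≠] s, a0 + a1 * (z - s) + a2 * (z - s) ^ 2 + (z - s) ^ 3 * H z = 0) :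
    a0 = 0 ∧ a1 = 0 ∧ a2 = 0 := by
  have e0 : a0 = 0 := by
    apply ks_coeff0 (H := fun z => a1 + a2 * (z - s) + (z - s) ^ 2 * H z) (s := s) (by fun_prop)
    filter_upwards [h] with z hz
    linear_combination hz
  have e1 : a1 = 0 := by
    apply ks_coeff0 (H := fun z => a2 + (z - s) * H z) (s := s) (by fun_prop)
    filter_upwards [h, self_mem_nhdsWithin] with z hz hne
    have hx : z - s ≠ 0 := sub_ne_zero.2 hne
    apply mul_left_cancel₀ hx
    rw [e0] at hz
    linear_combination hz
  refine ⟨e0, e1, ?_⟩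
  apply ks_coeff0 (H := H) (s := s) (by fun_prop)
  filter_upwards [h, self_mem_nhdsWithin] with z hz hne
  have hx : z - s ≠ 0 := sub_ne_zero.2 hne
  apply mul_left_cancel₀ (pow_ne_zero 2 hx)
  rw [e0, e1] at hz
  linear_combination hz

lemma ks_dslope {g : ℂ → ℂ} {s : ℂ} (hg : AnalyticAt ℂ g s) :
    ∃ h : ℂ → ℂ, AnalyticAt ℂ h s ∧ ∀ z, g z = g s + (z - s) * h z := by
  refine ⟨dslope g s, ?_, fun z => ?_⟩
  · obtain ⟨p, hp⟩ := hg
    exact ⟨_, hp.has_fpower_series_dslope_fslope⟩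
  · have := sub_smul_dslope g s z
    simp only [smul_eq_mul] at this
    linear_combination -this

lemma ks_merom {u : ℂ → ℂ} {s : ℂ} (ha : ∀ᶠ z in 𝓝[≠] s, AnalyticAt ℂ u z)
    (hp : Tendsto (fun w => ‖u w‖) (𝓝[≠] s) atTop) : MeromorphicAt u s := by
  have hinv : Tendsto (fun w => (u w)⁻¹) (𝓝[≠] s) (𝓝 0) :=
    tendsto_inv₀_cobounded.comp (tendsto_norm_atTop_iff_cobounded.1 hp)
  set v : ℂ → ℂ := Function.update (fun w => (u w)⁻¹) s 0 with hv
  have hva : AnalyticAt ℂ v s := by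
    apply Complex.analyticAt_of_differentiable_on_punctured_nhds_of_continuousAt
    · filter_upwards [ha, hp.eventually_gt_atTop 0, self_mem_nhdsWithin] with z hz h0 hne
      have : v =ᶠ[𝓝 z] fun w => (u w)⁻¹ := by
        filter_upwards [isOpen_compl_singleton.mem_nhds hne] with w hw
        simp [hv, Function.update_of_ne (show w ≠ s from hw)]
      exact this.differentiableAt_iff.2 (hz.differentiableAt.inv (norm_pos_iff.1 h0))
    · exact continuousAt_update_same.2 hinv
  have : MeromorphicAt (fun w => (u w)⁻¹) s := by
    apply hva.meromorphicAt.congr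
    filter_upwards [self_mem_nhdsWithin] with z hz
    simp [hv, Function.update_of_ne (show z ≠ s from hz)]
  have := this.inv
  refine this.congr (Eventually.of_forall fun z => by simp)

lemma ks_val {s : ℂ} {F : ℂ → ℂ} (hF : ContinuousAt F s)
    (h : ∀ᶠ z in 𝓝[≠] s, F z = 0) : F s = 0 := by
  have h1 : Tendsto F (𝓝[≠] s) (𝓝 (F s)) := hF.tendsto.mono_left nhdsWithin_le_nhds
  have h2 : Tendsto F (𝓝[≠] s) (𝓝 0) :=
    tendsto_const_nhds.congr' (h.mono fun z hz => hz.symm)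
  exact tendsto_nhds_unique h1 h2

lemma ks_step {f h : ℂ → ℂ} {s : ℂ} (k : ℕ) (a0 a1 a2 : ℂ) (hh : AnalyticAt ℂ h s)
    (hf : ∀ᶠ z in 𝓝[≠] s, f z = (z - s) ^ (-(k + 1 : ℕ) : ℤ) *
      (a0 + a1 * (z - s) + a2 * (z - s) ^ 2 + (z - s) ^ (k + 1) * h z)) :
    ∀ᶠ z in 𝓝[≠] s, deriv f z = (z - s) ^ (-(k + 1 + 1 : ℕ) : ℤ) *
      (-(k + 1) * a0 + -k * a1 * (z - s) + (1 - k) * a2 * (z - s) ^ 2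
        + (z - s) ^ (k + 1 + 1) * deriv h z) := by
  have hg : AnalyticAt ℂ (fun z => a0 + a1 * (z - s) + a2 * (z - s) ^ 2
      + (z - s) ^ (k + 1) * h z) s := by fun_prop
  have := ks_deriv_zpow _ hg hf
  have h2 : ∀ᶠ z in 𝓝[≠] s, AnalyticAt ℂ h z :=
    (hh.eventually_analyticAt).filter_mono nhdsWithin_le_nhds
  filter_upwards [this, h2] with z hz hhz
  rw [hz]
  have hx : HasDerivAt (fun w : ℂ => w - s) 1 z := (hasDerivAt_id z).sub_const s
  have hd := (((hx.const_mul a1).const_add a0).add ((hx.pow 2).const_mul a2)).add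
    ((hx.pow (k + 1)).mul hhz.differentiableAt.hasDerivAt)
  have hd' : deriv (fun z => a0 + a1 * (z - s) + a2 * (z - s) ^ 2
      + (z - s) ^ (k + 1) * h z) z = _ := hd.deriv
  rw [hd']
  have : (-(k + 1 : ℕ) : ℤ) - 1 = (-(k + 1 + 1 : ℕ) : ℤ) := by push_cast; ring
  rw [this]
  congr 1
  simp
  ring

lemma ks_order {ν b μ A s : ℂ} (hν : ν ≠ 0) {u g : ℂ → ℂ} (M : ℕ) (hM : 0 < M)
    (hode : ∀ᶠ z in 𝓝[≠] s,
      ν * deriv^[3] u z + b * deriv^[2] u z + μ * deriv u z + (u z) ^ 2 / 2 + A = 0)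
    (hg : AnalyticAt ℂ g s) (hg0 : g s ≠ 0)
    (hu : ∀ᶠ z in 𝓝[≠] s, u z = (z - s) ^ (-(M : ℤ)) * g z) : M = 3 := by
  have h1 := ks_deriv_zpow _ hg hu
  set G1 : ℂ → ℂ := fun z => ((-(M : ℤ) : ℤ) : ℂ) * g z + (z - s) * deriv g z with hG1
  have aG1 : AnalyticAt ℂ G1 s := by have := hg.deriv; fun_prop
  have h2 := ks_deriv_zpow _ aG1 h1
  set G2 : ℂ → ℂ := fun z => ((-(M : ℤ) - 1 : ℤ) : ℂ) * G1 z + (z - s) * deriv G1 z with hG2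
  have aG2 : AnalyticAt ℂ G2 s := by have := aG1.deriv; fun_prop
  have h3 := ks_deriv_zpow _ aG2 h2
  set G3 : ℂ → ℂ := fun z => ((-(M : ℤ) - 1 - 1 : ℤ) : ℂ) * G2 z + (z - s) * deriv G2 z with hG3
  have aG3 : AnalyticAt ℂ G3 s := by have := aG2.deriv; fun_prop
  have v3 : G3 s = -((M + 2) * (M + 1) * M) * g s := by
    simp [hG3, hG2, hG1]; ring
  have cg := hg.continuousAt
  have c1 := aG1.continuousAt
  have c2 := aG2.continuousAt
  have c3 := aG3.continuousAt
  have key : ∀ᶠ z in 𝓝[≠] s, z - s ≠ 0 ∧ ν * (((z - s) ^ (M + 3))⁻¹ * G3 z) +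
      b * (((z - s) ^ (M + 2))⁻¹ * G2 z) + μ * (((z - s) ^ (M + 1))⁻¹ * G1 z) +
      (((z - s) ^ M)⁻¹ * g z) ^ 2 / 2 + A = 0 := by
    filter_upwards [hode, hu, h1, h2, h3, self_mem_nhdsWithin] with z hz e0 e1 e2 e3 hne
    refine ⟨sub_ne_zero.2 hne, ?_⟩
    have f3 : deriv^[3] u z = (z - s) ^ (-(M : ℤ) - 1 - 1 - 1) * G3 z := e3
    have f2 : deriv^[2] u z = (z - s) ^ (-(M : ℤ) - 1 - 1) * G2 z := e2
    have f1 : deriv u z = (z - s) ^ (-(M : ℤ) - 1) * G1 z := e1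
    rw [f3, f2, f1, e0] at hz
    have p0 : -(M : ℤ) - 1 - 1 - 1 = -((M + 3 : ℕ) : ℤ) := by push_cast; ring
    have p1 : -(M : ℤ) - 1 - 1 = -((M + 2 : ℕ) : ℤ) := by push_cast; ring
    have p2 : -(M : ℤ) - 1 = -((M + 1 : ℕ) : ℤ) := by push_cast; ring
    rw [p0, p1, p2] at hz
    simpa only [zpow_neg, zpow_natCast] using hz
  have small : ∀ k : ℕ, M + (k + 1) = 3 → False := by
    intro k hk
    have := ks_val (s := s) (F := fun z => ν * G3 z + b * (z - s) * G2 z + μ * (z - s) ^ 2 * G1 z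
      + (z - s) ^ (k + 1) * (g z) ^ 2 / 2 + A * (z - s) ^ (M + 3)) (by fun_prop) (by
        filter_upwards [key] with z ⟨hx, hz⟩
        set x := z - s
        have e : x ^ (k + 1) = x ^ 3 / x ^ M := by
          rw [eq_div_iff (pow_ne_zero _ hx), ← pow_add]; congr 1; omega
        rw [e]
        have : x ^ (M + 3) * (ν * ((x ^ (M + 3))⁻¹ * G3 z) +
          b * ((x ^ (M + 2))⁻¹ * G2 z) + μ * ((x ^ (M + 1))⁻¹ * G1 z) +
          ((x ^ M)⁻¹ * g z) ^ 2 / 2 + A) = 0 := by rw [hz, mul_zero]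
        rw [← this]
        simp only [pow_add]
        field_simp)
    simp [hν, v3, hg0] at this
    rcases this with (h | h) | h
    · exact absurd h (by exact_mod_cast (by omega : M + 2 ≠ 0))
    · exact absurd h (by exact_mod_cast (by omega : M + 1 ≠ 0))
    · omega
  have large : ∀ k : ℕ, M = k + 4 → False := by
    intro k hk
    have := ks_val (s := s) (F := fun z => ν * (z - s) ^ (k + 1) * G3 z
      + b * (z - s) ^ (k + 2) * G2 z + μ * (z - s) ^ (k + 3) * G1 z
      + (g z) ^ 2 / 2 + A * (z - s) ^ (M + M)) (by fun_prop) (by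
        filter_upwards [key] with z ⟨hx, hz⟩
        set x := z - s
        have : x ^ (M + M) * (ν * ((x ^ (M + 3))⁻¹ * G3 z) +
          b * ((x ^ (M + 2))⁻¹ * G2 z) + μ * ((x ^ (M + 1))⁻¹ * G1 z) +
          ((x ^ M)⁻¹ * g z) ^ 2 / 2 + A) = 0 := by rw [hz, mul_zero]
        rw [← this]
        subst hk
        simp only [pow_add]
        field_simp)
    have hM2 : M + M ≠ 0 := by omega
    simp only [sub_self, zero_pow hM2, zero_pow (Nat.succ_ne_zero _), mul_zero, zero_mul,
      zero_add, add_zero] at this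
    exact hg0 (by simpa using this)
  by_contra hne
  rcases lt_or_gt_of_ne hne with h | h
  · exact small (2 - M) (by omega)
  · exact large (M - 4) (by omega)

lemma ks_local {ν b μ A s : ℂ} (hν : ν ≠ 0) {u : ℂ → ℂ}
    (ha : ∀ᶠ z in 𝓝[≠] s, AnalyticAt ℂ u z)
    (hp : Tendsto (fun w => ‖u w‖) (𝓝[≠] s) atTop)
    (hode : ∀ᶠ z in 𝓝[≠] s,
      ν * deriv^[3] u z + b * deriv^[2] u z + μ * deriv u z + (u z) ^ 2 / 2 + A = 0) :
    ∃ h : ℂ → ℂ, AnalyticAt ℂ h s ∧ ∀ᶠ z in 𝓝[≠] s,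
      u z = 120 * ν / (z - s) ^ 3 + -15 * b / (z - s) ^ 2
        + (45 / 228 * (16 * μ * ν - b ^ 2) / ν) / (z - s) + h z := by
  have hm := ks_merom ha hp
  have hneg := (tendsto_cobounded_iff_meromorphicOrderAt_neg hm).1
    (tendsto_norm_atTop_iff_cobounded.1 hp)
  obtain ⟨n, hn⟩ := WithTop.ne_top_iff_exists.1 (ne_top_of_lt hneg)
  obtain ⟨g, hg, hg0, hu⟩ := (meromorphicOrderAt_eq_int_iff hm).1 hn.symm
  have hn0 : n < 0 := by rw [← hn] at hneg; exact_mod_cast hneg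
  obtain ⟨M, rfl⟩ : ∃ M : ℕ, n = -(M : ℤ) := ⟨n.natAbs, by omega⟩
  simp only [smul_eq_mul] at hu
  obtain rfl : M = 3 := ks_order hν M (by omega) hode hg hg0 hu
  obtain ⟨h1, ah1, e1⟩ := ks_dslope hg
  obtain ⟨h2, ah2, e2⟩ := ks_dslope ah1
  obtain ⟨h, ah, e3⟩ := ks_dslope ah2
  have f0 : ∀ᶠ z in 𝓝[≠] s, u z = (z - s) ^ (-(2 + 1 : ℕ) : ℤ) *
      (g s + h1 s * (z - s) + h2 s * (z - s) ^ 2 + (z - s) ^ (2 + 1) * h z) := by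
    filter_upwards [hu] with z hz
    rw [hz, e1 z, e2 z, e3 z]
    norm_num
    left; ring
  have f1 := ks_step _ _ _ _ ah f0
  have f2 := ks_step _ _ _ _ ah.deriv f1
  have f3 := ks_step _ _ _ _ ah.deriv.deriv f2
  set c0 := g s
  set c1 := h1 s
  set c2 := h2 s
  have b0 := ah.continuousAt
  have b1 := ah.deriv.continuousAt
  have b2 := ah.deriv.deriv.continuousAt
  have b3 := ah.deriv.deriv.deriv.continuousAt
  have key := ks_coeff (s := s) (a0 := -60 * ν * c0 + c0 ^ 2 / 2)
    (a1 := -24 * ν * c1 + 12 * b * c0 + c0 * c1)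
    (a2 := -6 * ν * c2 + 6 * b * c1 - 3 * μ * c0 + c0 * c2 + c1 ^ 2 / 2)
    (H := fun z => ν * (z - s) ^ 3 * deriv (deriv (deriv h)) z +
      b * (2 * c2 + (z - s) ^ 3 * deriv (deriv h) z) +
      μ * (-2 * c1 - c2 * (z - s) + (z - s) ^ 3 * deriv h z)
      + (c0 * h z + c1 * c2 + c1 * (z - s) * h z + c2 ^ 2 / 2 * (z - s)
        + c2 * (z - s) ^ 2 * h z + (z - s) ^ 3 * h z ^ 2 / 2) + A * (z - s) ^ 3)
    (by fun_prop) (by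
      filter_upwards [hode, f0, f1, f2, f3, self_mem_nhdsWithin] with z hz g0 g1 g2 g3 hne
      have hx : z - s ≠ 0 := sub_ne_zero.2 hne
      have i3 : deriv^[3] u z = deriv (deriv (deriv u)) z := rfl
      have i2 : deriv^[2] u z = deriv (deriv u) z := rfl
      rw [i3, i2, g3, g2, g1, g0] at hz
      simp only [zpow_neg, zpow_natCast] at hz
      push_cast at hz
      generalize deriv (deriv (deriv h)) z = d3 at *
      generalize deriv (deriv h) z = d2 at *
      generalize deriv h z = d1 at *
      generalize h z = d0 at *
      generalize z - s = x at *
      have := congrArg (fun t => x ^ 6 * t) hz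
      simp only [mul_zero] at this
      rw [← this]
      field_simp
      ring)
  obtain ⟨k0, k1, k2⟩ := key
  have hc0 : c0 = 120 * ν := by
    have : c0 * (c0 - 120 * ν) = 0 := by linear_combination 2 * k0
    rcases mul_eq_zero.1 this with h | h
    · exact absurd h hg0
    · linear_combination h
  have hc1 : c1 = -15 * b := by
    have : (96 * ν) * (c1 + 15 * b) = 0 := by rw [hc0] at k1; linear_combination k1
    rcases mul_eq_zero.1 this with h | h
    · simp [hν] at h
    · linear_combination h
  have hc2 : c2 = 45 / 228 * (16 * μ * ν - b ^ 2) / ν := by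
    rw [hc0, hc1] at k2
    field_simp
    linear_combination 2 * k2
  refine ⟨h, ah, ?_⟩
  rw [← hc0, ← hc1, ← hc2]
  filter_upwards [f0, self_mem_nhdsWithin] with z hz hne
  have hx : z - s ≠ 0 := sub_ne_zero.2 hne
  rw [hz]
  simp only [zpow_neg, zpow_natCast]
  field_simp

/-- Edge integral along the segment from `q` to `q + ω`. -/
noncomputable def ksE (f : ℂ → ℂ) (q ω : ℂ) : ℂ := ∫ t in (0 : ℝ)..1, f (q + t * ω) * ω

/-- Integral along the boundary of the parallelogram. -/
noncomputable def ksB (f : ℂ → ℂ) (p ω₁ ω₂ : ℂ) : ℂ :=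
  ksE f p ω₁ + ksE f (p + ω₁) ω₂ - ksE f (p + ω₂) ω₁ - ksE f p ω₂

lemma ksB_zero {g : ℂ → ℂ} {p ω₁ ω₂ : ℂ}
    (hg : ∀ x ∈ Set.Icc (0 : ℝ) 1, ∀ y ∈ Set.Icc (0 : ℝ) 1,
      AnalyticAt ℂ g (p + x * ω₁ + y * ω₂)) : ksB g p ω₁ ω₂ = 0 := by
  let Φ : ℝ × ℝ → ℂ := fun v => p + v.1 * ω₁ + v.2 * ω₂
  let L : ℝ × ℝ →L[ℝ] ℂ := (ContinuousLinearMap.fst ℝ ℝ ℝ).smulRight ω₁ +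
    (ContinuousLinearMap.snd ℝ ℝ ℝ).smulRight ω₂
  have hΦ : ∀ v, HasFDerivAt Φ L v := by
    intro v
    have h : Φ = fun v => p + L v := by
      funext v; simp [Φ, L]; ring
    rw [h]
    exact L.hasFDerivAt.const_add p
  have hgd : ∀ v ∈ Set.Icc (0 : ℝ) 1 ×ˢ Set.Icc (0 : ℝ) 1,
      HasFDerivAt (fun v => g (Φ v)) (deriv g (Φ v) • L) v := by
    intro v hv
    have h1 := (hg v.1 hv.1 v.2 hv.2).differentiableAt.hasDerivAt
    have h2 := h1.complexToReal_fderiv.comp v (hΦ v)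
    refine h2.congr_fderiv ?_
    ext <;> simp [Φ]
  have hsub : Set.Ioo (min (0:ℝ) 1) (max 0 1) ×ˢ Set.Ioo (min (0:ℝ) 1) (max 0 1) ⊆
      Set.Icc (0 : ℝ) 1 ×ˢ Set.Icc (0 : ℝ) 1 := by
    simp only [zero_le_one, min_eq_left, max_eq_right]
    exact Set.prod_mono Set.Ioo_subset_Icc_self Set.Ioo_subset_Icc_self
  have hcont : ContinuousOn (fun v => g (Φ v)) (Set.uIcc (0 : ℝ) 1 ×ˢ Set.uIcc (0 : ℝ) 1) := by
    rw [Set.uIcc_of_le zero_le_one]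
    exact fun v hv => (hgd v hv).continuousAt.continuousWithinAt
  have hzero : ∀ v : ℝ × ℝ, (ω₂ • (deriv g (Φ v) • L)) (1, 0) +
      ((-ω₁) • (deriv g (Φ v) • L)) (0, 1) = 0 := by
    intro v; simp [L]; ring
  have key := MeasureTheory.integral2_divergence_prod_of_hasFDerivAt
    (fun v => ω₂ • g (Φ v)) (fun v => (-ω₁) • g (Φ v))
    (fun v => ω₂ • (deriv g (Φ v) • L)) (fun v => (-ω₁) • (deriv g (Φ v) • L)) 0 0 1 1
    (hcont.const_smul ω₂) (hcont.const_smul (-ω₁))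
    (fun v hv => (hgd v (hsub hv)).const_smul ω₂)
    (fun v hv => (hgd v (hsub hv)).const_smul (-ω₁))
    (by simp only [hzero]; exact MeasureTheory.integrableOn_zero)
  simp only [hzero] at key
  simp only [intervalIntegral.integral_zero, Φ, smul_eq_mul, neg_mul,
    intervalIntegral.integral_neg] at key
  unfold ksB ksE
  have e1 : (∫ t in (0 : ℝ)..1, g (p + t * ω₁) * ω₁) =
      ∫ x in (0 : ℝ)..1, ω₁ * g (p + x * ω₁ + (0 : ℝ) * ω₂) := by
    congr 1; funext x; simp; ring
  have e2 : (∫ t in (0 : ℝ)..1, g (p + ω₁ + t * ω₂) * ω₂) =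
      ∫ x in (0 : ℝ)..1, ω₂ * g (p + (1 : ℝ) * ω₁ + x * ω₂) := by
    congr 1; funext x; simp; ring
  have e3 : (∫ t in (0 : ℝ)..1, g (p + ω₂ + t * ω₁) * ω₁) =
      ∫ x in (0 : ℝ)..1, ω₁ * g (p + x * ω₁ + (1 : ℝ) * ω₂) := by
    congr 1; funext x
    rw [show p + ω₂ + x * ω₁ = p + x * ω₁ + (1 : ℝ) * ω₂ by push_cast; ring]; ring
  have e4 : (∫ t in (0 : ℝ)..1, g (p + t * ω₂) * ω₂) =
      ∫ x in (0 : ℝ)..1, ω₂ * g (p + (0 : ℝ) * ω₁ + x * ω₂) := by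
    congr 1; funext x; simp; ring
  rw [e1, e2, e3, e4]
  linear_combination -key

lemma ksE_ne {q ω s : ℂ} (h : (ω * (starRingEnd ℂ) (q - s)).im ≠ 0) (t : ℝ) :
    q + t * ω - s ≠ 0 := by
  intro h0
  apply h
  have : q - s = -(t * ω) := by linear_combination h0
  rw [this]; simp; ring

lemma ksE_pos {q ω s : ℂ} {k : ℝ} (h : 0 < k * (ω * (starRingEnd ℂ) (q - s)).im) :
    0 < k * (ksE (fun z => 1 / (z - s)) q ω).im := by
  have hne := ksE_ne (q := q) (ω := ω) (s := s) (fun h0 => by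
    rw [h0, mul_zero] at h; exact lt_irrefl _ h)
  have hc : Continuous (fun t : ℝ => 1 / (q + t * ω - s) * ω) := by
    apply Continuous.mul _ continuous_const
    exact continuous_const.div (by fun_prop) hne
  have him : (ksE (fun z => 1 / (z - s)) q ω).im =
      ∫ t in (0 : ℝ)..1, (1 / (q + t * ω - s) * ω).im := by
    unfold ksE
    exact (Complex.imCLM.intervalIntegral_comp_comm (hc.intervalIntegrable 0 1)).symm
  rw [him, ← intervalIntegral.integral_const_mul]
  apply intervalIntegral.intervalIntegral_pos_of_pos
  · exact ((Complex.continuous_im.comp hc).const_mul k).intervalIntegrable 0 1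
  · intro t
    have hn : 0 < Complex.normSq (q + t * ω - s) := Complex.normSq_pos.2 (hne t)
    have : (1 / (q + t * ω - s) * ω).im =
        (ω * (starRingEnd ℂ) (q - s)).im / Complex.normSq (q + t * ω - s) := by
      rw [one_div, Complex.inv_def]
      simp
      field_simp
      ring
    rw [this, ← mul_div_assoc]
    exact div_pos h hn
  · norm_num

lemma ksE_add {f g : ℂ → ℂ} {q ω : ℂ}
    (hf : ∀ t ∈ Set.Icc (0 : ℝ) 1, ContinuousAt f (q + t * ω))
    (hg : ∀ t ∈ Set.Icc (0 : ℝ) 1, ContinuousAt g (q + t * ω)) :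
    ksE (fun z => f z + g z) q ω = ksE f q ω + ksE g q ω := by
  have aux : ∀ f : ℂ → ℂ, (∀ t ∈ Set.Icc (0 : ℝ) 1, ContinuousAt f (q + t * ω)) →
      IntervalIntegrable (fun t : ℝ => f (q + t * ω) * ω) MeasureTheory.volume 0 1 := by
    intro f hf
    apply ContinuousOn.intervalIntegrable
    rw [Set.uIcc_of_le zero_le_one]
    intro t ht
    apply ContinuousAt.continuousWithinAt
    apply ContinuousAt.mul _ continuousAt_const
    exact ContinuousAt.comp (f := fun t : ℝ => q + t * ω) (hf t ht) (by fun_prop)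
  unfold ksE
  rw [← intervalIntegral.integral_add (aux f hf) (aux g hg)]
  congr 1; funext t; ring

lemma ksE_const_mul {f : ℂ → ℂ} {q ω c : ℂ} :
    ksE (fun z => c * f z) q ω = c * ksE f q ω := by
  unfold ksE
  rw [← intervalIntegral.integral_const_mul]
  congr 1; funext t; ring

lemma ksE_sum {T : Finset ℂ} {f : ℂ → ℂ → ℂ} {q ω : ℂ}
    (hf : ∀ s ∈ T, ∀ t ∈ Set.Icc (0 : ℝ) 1, ContinuousAt (f s) (q + t * ω)) :
    ksE (fun z => ∑ s ∈ T, f s z) q ω = ∑ s ∈ T, ksE (f s) q ω := by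
  classical
  induction T using Finset.induction_on with
  | empty => simp [ksE]
  | insert a T ha ih =>
    simp only [Finset.sum_insert ha]
    rw [ksE_add (hf a (by simp)), ih (fun s hs => hf s (by simp [hs]))]
    intro t ht
    apply tendsto_finsetSum
    intro s hs
    exact hf s (by simp [hs]) t ht

lemma ksE_congr {f g : ℂ → ℂ} {q ω : ℂ}
    (h : ∀ t ∈ Set.Icc (0 : ℝ) 1, f (q + t * ω) = g (q + t * ω)) : ksE f q ω = ksE g q ω := by
  unfold ksE
  apply intervalIntegral.integral_congr
  intro t ht
  rw [Set.uIcc_of_le zero_le_one] at ht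
  simp only [h t ht]

lemma ksE_deriv {F f : ℂ → ℂ} {q ω : ℂ}
    (hF : ∀ t ∈ Set.Icc (0 : ℝ) 1, HasDerivAt F (f (q + t * ω)) (q + t * ω))
    (hf : ∀ t ∈ Set.Icc (0 : ℝ) 1, ContinuousAt f (q + t * ω)) :
    ksE f q ω = F (q + ω) - F q := by
  unfold ksE
  have := intervalIntegral.integral_eq_sub_of_hasDerivAt (a := 0) (b := 1)
    (f := fun t : ℝ => F (q + t * ω)) (f' := fun t : ℝ => f (q + t * ω) * ω) (by
      intro t ht
      rw [Set.uIcc_of_le zero_le_one] at ht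
      have h1 : HasDerivAt (fun t : ℝ => q + t * ω) ω t := by
        simpa using ((Complex.ofRealCLM.hasDerivAt (x := t)).mul_const ω).const_add q
      exact HasDerivAt.comp (h := fun t : ℝ => q + t * ω) t (hF t ht) h1) (by
      apply ContinuousOn.intervalIntegrable
      rw [Set.uIcc_of_le zero_le_one]
      intro t ht
      apply ContinuousAt.continuousWithinAt
      apply ContinuousAt.mul _ continuousAt_const
      exact ContinuousAt.comp (f := fun t : ℝ => q + t * ω) (hf t ht) (by fun_prop))
  simpa using this

lemma ksE_decomp {T : Finset ℂ} {u g : ℂ → ℂ} {q ω c0 c1 r : ℂ}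
    (hg : ∀ t ∈ Set.Icc (0 : ℝ) 1, ContinuousAt g (q + t * ω))
    (hT : ∀ t ∈ Set.Icc (0 : ℝ) 1, ∀ s ∈ T, q + t * ω - s ≠ 0)
    (h : ∀ t ∈ Set.Icc (0 : ℝ) 1, u (q + t * ω) = g (q + t * ω) +
      ∑ s ∈ T, (c0 / (q + t * ω - s) ^ 3 + c1 / (q + t * ω - s) ^ 2 + r / (q + t * ω - s))) :
    ksE u q ω = ksE g q ω +
      (∑ s ∈ T, (-(c0 / 2) * ((q + ω - s) ^ 2)⁻¹ - c1 * (q + ω - s)⁻¹)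
        - ∑ s ∈ T, (-(c0 / 2) * ((q - s) ^ 2)⁻¹ - c1 * (q - s)⁻¹))
      + r * ∑ s ∈ T, ksE (fun z => 1 / (z - s)) q ω := by
  have hc1 : ∀ s ∈ T, ∀ t ∈ Set.Icc (0 : ℝ) 1,
      ContinuousAt (fun z => c0 / (z - s) ^ 3 + c1 / (z - s) ^ 2) (q + t * ω) := by
    intro s hs t ht
    have := hT t ht s hs
    have h2 := pow_ne_zero 2 this
    have h3 := pow_ne_zero 3 this
    fun_prop (disch := assumption)
  have hc2 : ∀ s ∈ T, ∀ t ∈ Set.Icc (0 : ℝ) 1,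
      ContinuousAt (fun z => 1 / (z - s)) (q + t * ω) := by
    intro s hs t ht
    have := hT t ht s hs
    fun_prop (disch := assumption)
  have hc2' : ∀ s ∈ T, ∀ t ∈ Set.Icc (0 : ℝ) 1,
      ContinuousAt (fun z => r * (1 / (z - s))) (q + t * ω) :=
    fun s hs t ht => (hc2 s hs t ht).const_mul r
  have hc3 : ∀ s ∈ T, ∀ t ∈ Set.Icc (0 : ℝ) 1,
      ContinuousAt (fun z => (c0 / (z - s) ^ 3 + c1 / (z - s) ^ 2) + r * (1 / (z - s)))
        (q + t * ω) :=
    fun s hs t ht => (hc1 s hs t ht).add (hc2' s hs t ht)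
  rw [ksE_congr (g := fun z => g z + ∑ s ∈ T,
    ((c0 / (z - s) ^ 3 + c1 / (z - s) ^ 2) + r * (1 / (z - s)))) (by
      intro t ht; rw [h t ht]; simp only [mul_one_div])]
  rw [ksE_add hg (by
    intro t ht
    apply tendsto_finsetSum
    intro s hs
    exact hc3 s hs t ht)]
  rw [ksE_sum hc3, ← Finset.sum_sub_distrib, Finset.mul_sum, add_assoc, ← Finset.sum_add_distrib]
  congr 1
  apply Finset.sum_congr rfl
  intro s hs
  rw [ksE_add (hc1 s hs) (hc2' s hs), ksE_const_mul]
  congr 1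
  apply ksE_deriv (F := fun z => -(c0 / 2) * ((z - s) ^ 2)⁻¹ - c1 * (z - s)⁻¹) _ (hc1 s hs)
  intro t ht
  have h1 := hT t ht s hs
  have hx : HasDerivAt (fun w : ℂ => w - s) 1 (q + t * ω) := (hasDerivAt_id _).sub_const s
  have := (((hx.pow 2).inv (pow_ne_zero 2 h1)).const_mul (-(c0 / 2))).sub
    ((hx.inv h1).const_mul c1)
  refine this.congr_deriv ?_
  simp
  field_simp
  ring

/-- Removing finitely many removable singularities via limits. -/
lemma ks_extend {f : ℂ → ℂ} {z : ℂ} {h : ℂ → ℂ} (ha : AnalyticAt ℂ h z)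
    (hf : ∀ᶠ w in 𝓝[≠] z, f w = h w) :
    (fun w => limUnder (𝓝[≠] w) f) =ᶠ[𝓝 z] h := by
  have h1 : ∀ᶠ w in 𝓝 z, w ≠ z → f w = h w := eventually_nhdsWithin_iff.1 hf
  filter_upwards [eventually_eventually_nhds.2 h1, ha.eventually_analyticAt] with w hw haw
  have hz : ∀ᶠ v in 𝓝[≠] w, v ≠ z := by
    by_cases e : w = z
    · subst e; exact self_mem_nhdsWithin
    · exact (isOpen_ne.mem_nhds e : {v | v ≠ z} ∈ 𝓝 w) |> mem_nhdsWithin_of_mem_nhds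
  apply Tendsto.limUnder_eq
  refine (haw.continuousAt.tendsto.mono_left nhdsWithin_le_nhds).congr' ?_
  filter_upwards [hw.filter_mono nhdsWithin_le_nhds, hz] with v h1 h2
  exact (h1 h2).symm

lemma ks_coords {ω₁ ω₂ : ℂ} (hω₁ : ω₁ ≠ 0) (hratio : (ω₂ / ω₁).im ≠ 0) :
    ∃ cx cy : ℂ → ℝ, (∀ z, z = cx z * ω₁ + cy z * ω₂) ∧
      ∀ x y : ℝ, cx (x * ω₁ + y * ω₂) = x ∧ cy (x * ω₁ + y * ω₂) = y := by
  refine ⟨fun z => (z / ω₁).re - (z / ω₁).im / (ω₂ / ω₁).im * (ω₂ / ω₁).re,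
    fun z => (z / ω₁).im / (ω₂ / ω₁).im, fun z => ?_, fun x y => ?_⟩
  · have h : z / ω₁ = (((z / ω₁).re - (z / ω₁).im / (ω₂ / ω₁).im * (ω₂ / ω₁).re : ℝ) : ℂ) +
        (((z / ω₁).im / (ω₂ / ω₁).im : ℝ) : ℂ) * (ω₂ / ω₁) := by
      apply Complex.ext
      · simp only [Complex.add_re, Complex.ofReal_re, Complex.re_ofReal_mul]; ring
      · simp only [Complex.add_im, Complex.ofReal_im, Complex.im_ofReal_mul]; field_simp; ring
    have h2 := congrArg (fun t => t * ω₁) h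
    simp only [add_mul] at h2
    rw [div_mul_cancel₀ _ hω₁, mul_assoc, div_mul_cancel₀ _ hω₁] at h2
    exact h2
  · have e : (x * ω₁ + y * ω₂) / ω₁ = (x : ℂ) + (y : ℂ) * (ω₂ / ω₁) := by field_simp
    have hy : ((x * ω₁ + y * ω₂) / ω₁).im / (ω₂ / ω₁).im = y := by
      rw [e]
      simp only [Complex.add_im, Complex.ofReal_im, Complex.im_ofReal_mul]; field_simp; ring
    refine ⟨?_, hy⟩
    simp only [hy]
    rw [e]
    simp only [Complex.add_re, Complex.ofReal_re, Complex.re_ofReal_mul]; ring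

lemma ks_liouville {u : ℂ → ℂ} {ω₁ ω₂ : ℂ} (hu : Differentiable ℂ u)
    (hω₁ : ω₁ ≠ 0) (hratio : (ω₂ / ω₁).im ≠ 0)
    (h1 : Function.Periodic u ω₁) (h2 : Function.Periodic u ω₂) (z : ℂ) : u z = u 0 := by
  obtain ⟨cx, cy, hc, -⟩ := ks_coords hω₁ hratio
  apply hu.apply_eq_apply_of_bounded
  let Φ : ℝ × ℝ → ℂ := fun v => v.1 * ω₁ + v.2 * ω₂
  have hΦ : Continuous Φ := by fun_prop
  have hK : IsCompact ((fun v => u (Φ v)) '' (Set.Icc (0 : ℝ) 1 ×ˢ Set.Icc (0 : ℝ) 1)) :=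
    (isCompact_Icc.prod isCompact_Icc).image (hu.continuous.comp hΦ)
  refine hK.isBounded.subset ?_
  rintro _ ⟨w, rfl⟩
  refine ⟨(Int.fract (cx w), Int.fract (cy w)),
    ⟨⟨Int.fract_nonneg _, (Int.fract_lt_one _).le⟩, ⟨Int.fract_nonneg _, (Int.fract_lt_one _).le⟩⟩, ?_⟩
  have e : Φ (Int.fract (cx w), Int.fract (cy w)) = w - ⌊cx w⌋ • ω₁ - ⌊cy w⌋ • ω₂ := by
    simp only [Φ, Int.fract, zsmul_eq_mul]
    push_cast
    linear_combination -hc w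
  simp only [e]
  rw [h2.sub_zsmul_eq, h1.sub_zsmul_eq]

lemma ks_shift {P : Set ℝ} (hP : P.Countable) (a : ℝ) :
    ∃ x, x < a ∧ a < x + 1 ∧ x ∉ P ∧ x + 1 ∉ P := by
  have hc : (P ∪ (fun x => x - 1) '' P).Countable := hP.union (hP.image _)
  obtain ⟨x, hx, h1, h2⟩ := (hc.dense_compl ℝ).exists_between (show a - 1 < a by linarith)
  refine ⟨x, h2, by linarith, fun h => hx (Or.inl h), fun h => hx (Or.inr ⟨x + 1, h, by simp⟩)⟩

/-- an elliptic (nonconstant doubly periodic meromorphic) solution of the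
KS ODE can only exist if `b² = 16μν` (residue condition). Here `S` is the set of poles of
the meromorphic function `u`. -/
theorem ks_elliptic_needs_b2_eq_16munu
    (ν b μ A : ℂ) (hν : ν ≠ 0) (u : ℂ → ℂ) (S : Set ℂ)
    (hiso : ∀ z ∈ S, 𝓝[S \ {z}] z = ⊥)
    (hana : AnalyticOnNhd ℂ u Sᶜ)
    (hpole : ∀ z ∈ S, Tendsto (fun w => ‖u w‖) (𝓝[≠] z) atTop)
    (hnc : ¬ ∃ c : ℂ, ∀ z ∉ S, u z = c)
    (hode : ∀ z ∉ S,
      ν * deriv^[3] u z + b * deriv^[2] u z + μ * deriv u z + (u z) ^ 2 / 2 + A = 0)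
    (ω₁ ω₂ : ℂ) (hω₁ : ω₁ ≠ 0) (hω₂ : ω₂ ≠ 0) (hratio : (ω₂ / ω₁).im ≠ 0)
    (hper : ∀ z ∉ S, u (z + ω₁) = u z ∧ u (z + ω₂) = u z) :
    b ^ 2 = 16 * μ * ν := by
  classical
  have hopen : IsOpen Sᶜ := by
    rw [isOpen_iff_mem_nhds]
    intro z hz
    filter_upwards [(hana z hz).eventually_analyticAt] with w hw hwS
    exact not_tendsto_nhds_of_tendsto_atTop (hpole w hwS) _
      ((hw.continuousAt.norm.tendsto).mono_left nhdsWithin_le_nhds)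
  have hclosed : IsClosed S := isOpen_compl_iff.1 hopen
  have hpunct : ∀ z ∈ S, ∀ᶠ w in 𝓝[≠] z, w ∉ S := by
    intro z hz
    have h : ∀ᶠ w in 𝓝[S \ {z}] z, False := by rw [hiso z hz]; exact eventually_bot
    rw [eventually_nhdsWithin_iff] at h ⊢
    filter_upwards [h] with w hw hne hS
    exact hw ⟨hS, hne⟩
  have hdisc : IsDiscrete S := by
    rw [isDiscrete_iff_nhdsNE]
    intro x hx
    rw [← hiso x hx, Set.sdiff_eq, Set.inter_comm, nhdsWithin_inter']
  have hcount : S.Countable := by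
    have : DiscreteTopology S := hdisc.to_subtype
    exact Set.countable_coe_iff.1 (TopologicalSpace.separableSpace_iff_countable.1 inferInstance)
  obtain ⟨cx, cy, hc, hcxy⟩ := ks_coords hω₁ hratio
  by_cases hS : S = ∅
  · exfalso
    subst hS
    refine hnc ⟨u 0, fun z _ => ?_⟩
    exact ks_liouville (fun z => (hana z (by simp)).differentiableAt) hω₁ hratio
      (fun z => (hper z (by simp)).1) (fun z => (hper z (by simp)).2) z
  obtain ⟨s0, hs0⟩ := Set.nonempty_iff_ne_empty.2 hS
  obtain ⟨x0, hx1, hx2, hx3, hx4⟩ := ks_shift (hcount.image cx) (cx s0)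
  obtain ⟨y0, hy1, hy2, hy3, hy4⟩ := ks_shift (hcount.image cy) (cy s0)
  set p : ℂ := x0 * ω₁ + y0 * ω₂ with hp
  have hpt : ∀ x y : ℝ, p + x * ω₁ + y * ω₂ ∈ S → x ≠ 0 ∧ x ≠ 1 ∧ y ≠ 0 ∧ y ≠ 1 := by
    intro x y h
    have e : p + x * ω₁ + y * ω₂ = ((x0 + x : ℝ) : ℂ) * ω₁ + ((y0 + y : ℝ) : ℂ) * ω₂ := by
      rw [hp]; push_cast; ring
    have a1 : x0 + x ∈ cx '' S := ⟨_, h, by rw [e]; exact (hcxy _ _).1⟩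
    have a2 : y0 + y ∈ cy '' S := ⟨_, h, by rw [e]; exact (hcxy _ _).2⟩
    refine ⟨?_, ?_, ?_, ?_⟩ <;> rintro rfl
    · exact hx3 (by simpa using a1)
    · exact hx4 a1
    · exact hy3 (by simpa using a2)
    · exact hy4 a2
  let Φ : ℝ × ℝ → ℂ := fun v => p + v.1 * ω₁ + v.2 * ω₂
  have hΦ : Continuous Φ := by fun_prop
  set K : Set ℂ := Φ '' (Set.Icc (0 : ℝ) 1 ×ˢ Set.Icc (0 : ℝ) 1) with hK
  have hKc : IsCompact K := (isCompact_Icc.prod isCompact_Icc).image hΦ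
  have hfin : (S ∩ K).Finite :=
    (hKc.inter_left hclosed).finite (hdisc.mono Set.inter_subset_left)
  set T : Finset ℂ := hfin.toFinset with hT
  have hTmem : ∀ s, s ∈ T ↔ s ∈ S ∧ s ∈ K := fun s => by simp [hT]
  set r : ℂ := 45 / 228 * (16 * μ * ν - b ^ 2) / ν with hr
  let P : ℂ → ℂ → ℂ := fun s z => 120 * ν / (z - s) ^ 3 + -15 * b / (z - s) ^ 2 + r / (z - s)
  have hPa : ∀ s z, z ≠ s → AnalyticAt ℂ (P s) z := by
    intro s z h
    have h1 : z - s ≠ 0 := sub_ne_zero.2 h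
    have h2 := pow_ne_zero 2 h1
    have h3 := pow_ne_zero 3 h1
    show AnalyticAt ℂ (fun z => 120 * ν / (z - s) ^ 3 + -15 * b / (z - s) ^ 2 + r / (z - s)) z
    fun_prop (disch := assumption)
  have hsumA : ∀ (T' : Finset ℂ) (z : ℂ), z ∉ T' → AnalyticAt ℂ (fun w => ∑ s ∈ T', P s w) z := by
    intro T' z hz
    apply Finset.analyticAt_fun_sum
    intro s hs
    exact hPa s z (fun h => hz (h ▸ hs))
  let f : ℂ → ℂ := fun z => u z - ∑ s ∈ T, P s z
  let g : ℂ → ℂ := fun w => limUnder (𝓝[≠] w) f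
  have hgoff : ∀ z ∉ S, g =ᶠ[𝓝 z] f ∧ AnalyticAt ℂ f z := by
    intro z hz
    have hfa : AnalyticAt ℂ f z :=
      (hana z hz).sub (hsumA T z (fun h => hz ((hTmem z).1 h).1))
    exact ⟨ks_extend hfa (Eventually.of_forall fun _ => rfl), hfa⟩
  have hgK : ∀ z ∈ K, AnalyticAt ℂ g z := by
    intro z hzK
    by_cases hz : z ∈ S
    · have hzT : z ∈ T := (hTmem z).2 ⟨hz, hzK⟩
      obtain ⟨h, ha, he⟩ := ks_local (A := A) hν
        ((hpunct z hz).mono fun w hw => hana w hw) (hpole z hz)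
        ((hpunct z hz).mono fun w hw => hode w hw)
      have ha' : AnalyticAt ℂ (fun w => h w - ∑ s ∈ T.erase z, P s w) z :=
        ha.sub (hsumA _ z (by simp))
      have := ks_extend (f := f) ha' (by
        filter_upwards [he] with w hw
        have e := Finset.add_sum_erase T (fun s => P s w) hzT
        show u w - ∑ s ∈ T, P s w = _
        rw [← e, hw]
        simp only [P]
        ring)
      exact ha'.congr this.symm
    · obtain ⟨h1, h2⟩ := hgoff z hz
      exact h2.congr h1.symm
  have hB : ksB g p ω₁ ω₂ = 0 := by
    apply ksB_zero
    intro x hx y hy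
    exact hgK _ ⟨(x, y), ⟨hx, hy⟩, rfl⟩
  have hdec : ∀ q ω : ℂ, (∀ t ∈ Set.Icc (0 : ℝ) 1, q + t * ω ∉ S) →
      ksE u q ω = ksE g q ω +
      (∑ s ∈ T, (-(120 * ν / 2) * ((q + ω - s) ^ 2)⁻¹ - (-15 * b) * (q + ω - s)⁻¹)
        - ∑ s ∈ T, (-(120 * ν / 2) * ((q - s) ^ 2)⁻¹ - (-15 * b) * (q - s)⁻¹))
      + r * ∑ s ∈ T, ksE (fun z => 1 / (z - s)) q ω := by
    intro q ω h
    apply ksE_decomp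
    · intro t ht
      obtain ⟨h1, h2⟩ := hgoff _ (h t ht)
      exact (h2.congr h1.symm).continuousAt
    · intro t ht s hs h0
      have : q + t * ω = s := sub_eq_zero.1 h0
      exact h t ht (this ▸ ((hTmem s).1 hs).1)
    · intro t ht
      rw [(hgoff _ (h t ht)).1.eq_of_nhds]
      simp only [f, P]
      ring
  have n1 : ∀ t ∈ Set.Icc (0 : ℝ) 1, p + t * ω₁ ∉ S := fun t _ h =>
    (hpt t 0 (by simpa using h)).2.2.1 rfl
  have n2 : ∀ t ∈ Set.Icc (0 : ℝ) 1, p + ω₁ + t * ω₂ ∉ S := fun t _ h =>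
    (hpt 1 t (by simpa using h)).2.1 rfl
  have n3 : ∀ t ∈ Set.Icc (0 : ℝ) 1, p + ω₂ + t * ω₁ ∉ S := fun t _ h =>
    (hpt t 1 (by
      rw [show p + t * ω₁ + ((1 : ℝ) : ℂ) * ω₂ = p + ω₂ + t * ω₁ by push_cast; ring]
      exact h)).2.2.2 rfl
  have n4 : ∀ t ∈ Set.Icc (0 : ℝ) 1, p + t * ω₂ ∉ S := fun t _ h =>
    (hpt 0 t (by simpa using h)).1 rfl
  have d1 := hdec _ _ n1
  have d2 := hdec _ _ n2
  have d3 := hdec _ _ n3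
  have d4 := hdec _ _ n4
  have p1 : ksE u (p + ω₂) ω₁ = ksE u p ω₁ := by
    unfold ksE
    apply intervalIntegral.integral_congr
    intro t ht
    rw [Set.uIcc_of_le zero_le_one] at ht
    have := (hper _ (n1 t ht)).2
    simp only
    rw [← this, show p + t * ω₁ + ω₂ = p + ω₂ + t * ω₁ by ring]
  have p2 : ksE u (p + ω₁) ω₂ = ksE u p ω₂ := by
    unfold ksE
    apply intervalIntegral.integral_congr
    intro t ht
    rw [Set.uIcc_of_le zero_le_one] at ht
    have := (hper _ (n4 t ht)).1
    simp only
    rw [← this, show p + t * ω₂ + ω₁ = p + ω₁ + t * ω₂ by ring]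
  have hsum : r * ∑ s ∈ T, ksB (fun z => 1 / (z - s)) p ω₁ ω₂ = 0 := by
    have hB' := hB
    simp only [ksB, Finset.sum_add_distrib, Finset.sum_sub_distrib] at hB' ⊢
    rw [show p + ω₂ + ω₁ = p + ω₁ + ω₂ by ring] at d3
    linear_combination p2 - p1 - d1 - d2 + d3 + d4 - hB'
  set D : ℝ := (ω₂ * (starRingEnd ℂ) ω₁).im with hD
  have hD0 : D ≠ 0 := by
    intro h0
    apply hratio
    rw [Complex.div_im]
    have : ω₂.im * ω₁.re - ω₂.re * ω₁.im = 0 := by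
      rw [hD] at h0; simp at h0; linarith
    rw [← sub_div, this, zero_div]
  have hDD : 0 < D * D := mul_self_pos.2 hD0
  have hpos : ∀ s ∈ T, 0 < D * (ksB (fun z => 1 / (z - s)) p ω₁ ω₂).im := by
    intro s hs
    obtain ⟨hsS, ⟨α, γ⟩, ⟨⟨ha0, ha1⟩, hg0, hg1⟩, rfl⟩ := (hTmem s).1 hs
    obtain ⟨k1, k2, k3, k4⟩ := hpt α γ hsS
    simp only at ha0 ha1 hg0 hg1
    have ha0 : 0 < α := lt_of_le_of_ne ha0 k1.symm
    have ha1 : 0 < 1 - α := sub_pos.2 (lt_of_le_of_ne ha1 k2)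
    have hg0 : 0 < γ := lt_of_le_of_ne hg0 k3.symm
    have hg1 : 0 < 1 - γ := sub_pos.2 (lt_of_le_of_ne hg1 k4)
    set s := Φ (α, γ) with hs'
    have q1 : 0 < D * (ω₁ * (starRingEnd ℂ) (p - s)).im := by
      have : D * (ω₁ * (starRingEnd ℂ) (p - s)).im = γ * (D * D) := by
        simp [hs', Φ, hD]; ring
      rw [this]; positivity
    have q2 : 0 < D * (ω₂ * (starRingEnd ℂ) (p + ω₁ - s)).im := by
      have : D * (ω₂ * (starRingEnd ℂ) (p + ω₁ - s)).im = (1 - α) * (D * D) := by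
        simp [hs', Φ, hD]; ring
      rw [this]; positivity
    have q3 : 0 < (-D) * (ω₁ * (starRingEnd ℂ) (p + ω₂ - s)).im := by
      have : (-D) * (ω₁ * (starRingEnd ℂ) (p + ω₂ - s)).im = (1 - γ) * (D * D) := by
        simp [hs', Φ, hD]; ring
      rw [this]; positivity
    have q4 : 0 < (-D) * (ω₂ * (starRingEnd ℂ) (p - s)).im := by
      have : (-D) * (ω₂ * (starRingEnd ℂ) (p - s)).im = α * (D * D) := by
        simp [hs', Φ, hD]; ring
      rw [this]; positivity
    have w1 := ksE_pos q1
    have w2 := ksE_pos q2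
    have w3 := ksE_pos q3
    have w4 := ksE_pos q4
    simp only [ksB, Complex.add_im, Complex.sub_im]
    linarith
  have hs0T : s0 ∈ T := by
    refine (hTmem s0).2 ⟨hs0, (cx s0 - x0, cy s0 - y0),
      ⟨⟨by simp only; linarith, by simp only; linarith⟩,
        ⟨by simp only; linarith, by simp only; linarith⟩⟩, ?_⟩
    conv_rhs => rw [hc s0]
    simp only [Φ, hp]
    push_cast
    ring
  have hne : ∑ s ∈ T, ksB (fun z => 1 / (z - s)) p ω₁ ω₂ ≠ 0 := by
    intro h0
    have : 0 < ∑ s ∈ T, D * (ksB (fun z => 1 / (z - s)) p ω₁ ω₂).im :=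
      Finset.sum_pos hpos ⟨s0, hs0T⟩
    rw [← Finset.mul_sum, ← Complex.im_sum, h0] at this
    simp at this
  have hr0 : r = 0 := (mul_eq_zero.1 hsum).resolve_right hne
  rw [hr] at hr0
  field_simp at hr0
  linear_combination (-1 / 45 : ℂ) * hr0
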